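/- Let Θ be a compact metric space, α a homeomorphism of Θ possessing an aperiodic point θ* which is not isolated, and let f be an α-forced increasing interval map on Θ × I admitting an f-invariant curve Γ = {(θ,γ(θ))} with γ : Θ → int I continuous. Then there exists a topological extension f̂ of f with factor map h(θ,x) = (θ, h_θ(x)) such that: f̂ is an α-forced increasing interval map; all h_θ are non-decreasing; h is injective off h^{-1}(Γ); countably many points of Γ have vertical-segment h-preimages and all others singleton preimages; h^{-1}(Γ) contains no graph of a continuous curve η : Θ → I; and h^{-1}(Γ) is a closed, f̂-invariant, pinched set projecting onto all of Θ. -/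

import Mathlib

open Set Function MeasureTheory

noncomputable section

/-- The circle `T¹ = ℝ/ℤ`. -/
abbrev T1 := AddCircle (1 : ℝ)

/-- The `n`-th iterate (`n ∈ ℤ`) of a bijection. -/
def zIter {X : Type*} (g : Equiv.Perm X) (n : ℤ) : X → X := fun x => (g ^ n) x

/-- A set of integers is syndetic if it has bounded gaps. -/
def ZSyndetic (S : Set ℤ) : Prop := ∃ N : ℕ, ∀ n : ℤ, ∃ k ∈ S, |k - n| ≤ (N : ℤ)

/-- A homeomorphism `α` of a metric space is almost periodic if for every `ε > 0` the set
`{n ∈ ℤ | dist(αⁿ, Id) < ε}` is syndetic. -/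
def AlmostPeriodicHomeo {Θ : Type*} [MetricSpace Θ] (α : Θ ≃ₜ Θ) : Prop :=
  ∀ ε > (0 : ℝ), ZSyndetic {n : ℤ | ∀ θ : Θ, dist (zIter α.toEquiv n θ) θ < ε}

/-- A homeomorphism is minimal if every (two-sided) orbit is dense. -/
def MinimalHomeo {Θ : Type*} [TopologicalSpace Θ] (α : Θ ≃ₜ Θ) : Prop :=
  ∀ θ : Θ, Dense (range fun n : ℤ => zIter α.toEquiv n θ)

/-- A self-map `g` of a metric space is almost periodic if its family of iterates
is (uniformly) equicontinuous. -/
def AlmostPeriodicMap {Y : Type*} [MetricSpace Y] (g : Y → Y) : Prop :=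
  ∀ ε > (0 : ℝ), ∃ δ > (0 : ℝ), ∀ y y' : Y, dist y y' < δ → ∀ n : ℕ, dist (g^[n] y) (g^[n] y') < ε

/-- `h` is a factor map (semiconjugacy) from `(X, f)` onto `(Y, g)`:
a continuous surjection with `h ∘ f = g ∘ h`.  Then `(X, f)` is a topological
extension of `(Y, g)`. -/
def IsFactorMap {X Y : Type*} [TopologicalSpace X] [TopologicalSpace Y]
    (f : X → X) (g : Y → Y) (h : X → Y) : Prop :=
  Continuous h ∧ Surjective h ∧ h ∘ f = g ∘ h

/-- A map `h` is almost 1-1 if the set of points of the target having exactly one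
preimage is dense. -/
def AlmostOneOne {X Y : Type*} [TopologicalSpace Y] (h : X → Y) : Prop :=
  Dense {y : Y | ∃! x, h x = y}

/-- A witness that the system `(X, f)` is almost automorphic: an almost periodic
homeomorphism of a compact metric space which is an almost 1-1 factor of `(X, f)`. -/
structure AAWitness {X : Type*} [TopologicalSpace X] (f : X → X) where
  (Y : Type)
  [mY : MetricSpace Y]
  [cY : CompactSpace Y]
  (g : Y ≃ₜ Y)
  (hmap : X → Y)
  (factor : IsFactorMap f (⇑g) hmap)
  (a11 : AlmostOneOne hmap)
  (ap : ∀ ε > (0 : ℝ), ∃ δ > (0 : ℝ), ∀ y y' : Y, dist y y' < δ →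
        ∀ n : ℤ, dist (zIter g.toEquiv n y) (zIter g.toEquiv n y') < ε)

/-- `M` is a minimal set of `f`: nonempty, closed, invariant, and without proper
nonempty closed invariant subsets. -/
def IsMinimalSet {X : Type*} [TopologicalSpace X] (f : X → X) (M : Set X) : Prop :=
  M.Nonempty ∧ IsClosed M ∧ f '' M = M ∧
    ∀ M' ⊆ M, M'.Nonempty → IsClosed M' → f '' M' ⊆ M' → M' = M

/-- The restriction of `f` to an invariant set. -/
def restrictMap {X : Type*} {f : X → X} {M : Set X} (hM : Set.MapsTo f M M) : ↥M → ↥M :=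
  Set.MapsTo.restrict f M M hM

/-- `M` is an almost automorphic minimal set of `f`: `f` restricted to `M` admits an
almost periodic almost 1-1 factor. -/
def IsAAMinimal {X : Type*} [MetricSpace X] (f : X → X) (M : Set X) : Prop :=
  IsMinimalSet f M ∧ ∀ hM : Set.MapsTo f M M, Nonempty (AAWitness (restrictMap hM))

/-- `M` is an almost periodic minimal set of `f`: the family of iterates of the
restriction of `f` to `M` is equicontinuous. -/
def IsAPMinimal {X : Type*} [MetricSpace X] (f : X → X) (M : Set X) : Prop :=
  IsMinimalSet f M ∧ ∀ hM : Set.MapsTo f M M, AlmostPeriodicMap (restrictMap hM)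

/-- A subset of a product is pinched if some fibre is a singleton. -/
def Pinched {Θ X : Type*} (A : Set (Θ × X)) : Prop := ∃ θ : Θ, ∃! x : X, (θ, x) ∈ A

/-- An `α`-forced increasing interval map on `Θ × I`: a continuous skew product over `α`
whose fibre maps are strictly increasing. -/
def ForcedIncreasing {Θ : Type*} [TopologicalSpace Θ] {I : Set ℝ} (α : Θ → Θ)
    (f : Θ × ↥I → Θ × ↥I) : Prop :=
  Continuous f ∧ (∀ p : Θ × ↥I, (f p).1 = α p.1) ∧
    ∀ θ : Θ, StrictMono fun x : ↥I => (f (θ, x)).2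

/-- The fibre of `M ⊆ Θ × I` over `θ`, as a set of reals. -/
def fiberSet {Θ : Type*} {I : Set ℝ} (M : Set (Θ × ↥I)) (θ : Θ) : Set ℝ :=
  (fun x : ↥I => (x : ℝ)) '' {x : ↥I | (θ, x) ∈ M}

/-- The filled-in envelope `[φ⁻_M, φ⁺_M]` of `M`, where `φ⁻_M(θ) = inf M_θ` and
`φ⁺_M(θ) = sup M_θ`. -/
def FilledEnvelope {Θ : Type*} {I : Set ℝ} (M : Set (Θ × ↥I)) : Set (Θ × ↥I) :=
  {p : Θ × ↥I | sInf (fiberSet M p.1) ≤ (p.2 : ℝ) ∧ (p.2 : ℝ) ≤ sSup (fiberSet M p.1)}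

/-- The graph of a curve `γ : Θ → I`. -/
def curveGraph {Θ : Type*} {I : Set ℝ} (γ : Θ → ↥I) : Set (Θ × ↥I) :=
  {p : Θ × ↥I | p.2 = γ p.1}

/-- The conclusion of the blow-up construction (properties (i)-(v) of the main theorem):
`f̂` is a topological extension of `f` via the fibre-respecting factor map `h`, `f̂` is an
`α`-forced increasing interval map, the fibre maps of `h` are non-decreasing, `h` is
injective off `h⁻¹(Γ)`, countably many points of `Γ` have non-degenerate vertical-segment
preimages while all other points of `Γ` have singleton preimages, and `h⁻¹(Γ)` contains
the graph of no continuous curve. -/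
def BlowUpConclusion {Θ : Type*} [TopologicalSpace Θ] {I : Set ℝ}
    (α : Θ → Θ) (f : Θ × ↥I → Θ × ↥I) (γ : Θ → ↥I)
    (fhat : Θ × ↥I → Θ × ↥I) (h : Θ × ↥I → Θ × ↥I) : Prop :=
  IsFactorMap fhat f h ∧ (∀ p : Θ × ↥I, (h p).1 = p.1) ∧
  ForcedIncreasing α fhat ∧
  (∀ θ : Θ, Monotone fun x : ↥I => (h (θ, x)).2) ∧
  Set.InjOn h (h ⁻¹' curveGraph γ)ᶜ ∧
  (∃ C : Set (Θ × ↥I), C ⊆ curveGraph γ ∧ C.Countable ∧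
    (∀ p ∈ C, ∃ x₁ x₂ : ↥I, x₁ < x₂ ∧ h ⁻¹' {p} = {p.1} ×ˢ Set.Icc x₁ x₂) ∧
    (∀ p ∈ curveGraph γ \ C, ∃ x : ↥I, h ⁻¹' {p} = {(p.1, x)})) ∧
  (∀ η : Θ → ↥I, Continuous η → ¬ (curveGraph η ⊆ h ⁻¹' curveGraph γ))

/-!
Fix a function on `Θ × ℝ`, non-decreasing on fibres and continuous except for a jump at the single
point `(θs, γ θs)`, whose restriction to `Γ` oscillates between `0` and `1` near that point. Once
`f` is extended to a fibre-preserving homeomorphism of `Θ × ℝ`, pulling this function back along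
negative iterates gives functions `φ n`, permuted by `f`, which jump exactly at the points `c n` of
the orbit of `(θs, γ θs)`. Take the graph of `(φ n)ₙ` and insert over each `c n` the segment of all
possible `n`-th coordinates. The result is compact, `f` lifts to it, and its fibres are densely
ordered compact chains whose end points depend continuously on `θ`. A strictly increasing
continuous height, normalised between these end points, therefore identifies it with `Θ × I`. The
factor map `h` forgets the `n`-th coordinates.

A continuous curve in `h⁻¹(Γ)` would extend the oscillating function `θ ↦ φ 0 (θ, γ θ)`
continuously to `θs`. Since the orbit of `θs` consists of non-isolated points, Baire's theorem
gives a point outside it, and there the fibre of `h⁻¹(Γ)` is a single point.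
-/

section FiberOrder

variable {Θ X : Type*}

/-- The fibrewise order on a product: equal base points and ordered second coordinates. It turns
statements about all fibre maps of a skew product into statements about a single relation. -/
def FiberLE [LE X] (p q : Θ × X) : Prop := p.1 = q.1 ∧ p.2 ≤ q.2

namespace FiberLE

theorem refl [Preorder X] (p : Θ × X) : FiberLE p p := ⟨rfl, le_rfl⟩

theorem antisymm [PartialOrder X] {p q : Θ × X} (hpq : FiberLE p q) (hqp : FiberLE q p) : p = q :=
  Prod.ext hpq.1 (hpq.2.antisymm hqp.2)

theorem strictMono_snd [LinearOrder X] {Θ' X' : Type*} [Preorder X'] {g : Θ × X → Θ' × X'}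
    {β : Θ → Θ'} (hβ : ∀ p, (g p).1 = β p.1) (hg : ∀ p q, FiberLE (g p) (g q) ↔ FiberLE p q)
    (θ : Θ) : StrictMono fun x => (g (θ, x)).2 :=
  strictMono_of_le_iff_le fun x y => by
    simpa only [FiberLE, hβ, true_and] using (hg (θ, x) (θ, y)).symm

theorem iff_of_strictMono [LinearOrder X] {Θ' X' : Type*} [Preorder X'] {g : Θ × X → Θ' × X'}
    {β : Θ → Θ'} (hβi : Injective β) (hβ : ∀ p, (g p).1 = β p.1)
    (hg : ∀ θ, StrictMono fun x => (g (θ, x)).2) (p q : Θ × X) :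
    FiberLE (g p) (g q) ↔ FiberLE p q := by
  obtain ⟨θ, x⟩ := p
  obtain ⟨θ', y⟩ := q
  simp only [FiberLE, hβ, hβi.eq_iff]
  refine and_congr_right ?_
  rintro rfl
  exact (hg θ).le_iff_le

end FiberLE

theorem ForcedIncreasing.fiberLE_iff [TopologicalSpace Θ] {I : Set ℝ} {α : Θ → Θ}
    {f : Θ × I → Θ × I} (hf : ForcedIncreasing α f) (hα : Injective α) (p q : Θ × I) :
    FiberLE (f p) (f q) ↔ FiberLE p q :=
  FiberLE.iff_of_strictMono hα hf.2.1 hf.2.2 p q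

end FiberOrder

section SkewHomeomorph

variable {Θ Θ' X Y : Type*} [TopologicalSpace Θ] [TopologicalSpace Θ']
  [LinearOrder X] [TopologicalSpace X] [OrderTopology X]
  [LinearOrder Y] [TopologicalSpace Y] [OrderTopology Y]

theorem continuous_orderIso_symm {g : Θ → X ≃o Y} (hg : Continuous fun p : Θ × X => g p.1 p.2) :
    Continuous fun q : Θ × Y => (g q.1).symm q.2 := by
  have hg_left (x : X) : Continuous fun q : Θ × Y => g q.1 x :=
    hg.comp (continuous_fst.prodMk continuous_const)
  refine continuous_iff_continuousAt.2 fun q => tendsto_order.2 ⟨fun x hx => ?_, fun x hx => ?_⟩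
  · have hlt : g q.1 x < q.2 := (g q.1).lt_symm_apply.1 hx
    filter_upwards [(hg_left x).continuousAt.eventually_lt continuousAt_snd hlt] with r hr
      using (g r.1).lt_symm_apply.2 hr
  · have hlt : q.2 < g q.1 x := (g q.1).symm_apply_lt.1 hx
    filter_upwards [continuousAt_snd.eventually_lt (hg_left x).continuousAt hlt] with r hr
      using (g r.1).symm_apply_lt.2 hr

/-- The skew product over a homeomorphism `α` with fibre maps the increasing bijections `g θ`, as
a homeomorphism. -/
def skewHomeomorph (α : Θ ≃ₜ Θ') (g : Θ → X ≃o Y) (hg : Continuous fun p : Θ × X => g p.1 p.2) :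
    Θ × X ≃ₜ Θ' × Y where
  toFun p := (α p.1, g p.1 p.2)
  invFun q := (α.symm q.1, (g (α.symm q.1)).symm q.2)
  left_inv p := by simp
  right_inv q := by simp
  continuous_toFun := (α.continuous.comp continuous_fst).prodMk hg
  continuous_invFun := (α.symm.continuous.comp continuous_fst).prodMk <|
    (continuous_orderIso_symm hg).comp
      ((α.symm.continuous.comp continuous_fst).prodMk continuous_snd)

end SkewHomeomorph

section TranslationExtension

open Filter

variable {Θ : Type*} {a b : ℝ}

/-- The extension of a real function on `[a, b]` to `ℝ` by translations on both sides. -/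
def translationExtend (hab : a ≤ b) (k : Icc a b → ℝ) (x : ℝ) : ℝ :=
  k (projIcc a b hab x) + (x - projIcc a b hab x)

theorem translationExtend_coe (hab : a ≤ b) (k : Icc a b → ℝ) (x : Icc a b) :
    translationExtend hab k x = k x := by
  simp [translationExtend]

theorem continuous_translationExtend [TopologicalSpace Θ] (hab : a ≤ b) {k : Θ × Icc a b → ℝ}
    (hk : Continuous k) :
    Continuous fun p : Θ × ℝ => translationExtend hab (fun x => k (p.1, x)) p.2 := by
  unfold translationExtend
  have : Continuous (projIcc a b hab) := continuous_projIcc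
  fun_prop

theorem strictMono_translationExtend (hab : a ≤ b) {k : Icc a b → ℝ} (hk : StrictMono k) :
    StrictMono (translationExtend hab k) := by
  intro x y hxy
  have hproj : projIcc a b hab x ≤ projIcc a b hab y := monotone_projIcc hab hxy.le
  have hlip : (projIcc a b hab y : ℝ) - projIcc a b hab x ≤ y - x :=
    (le_abs_self _).trans ((abs_projIcc_sub_projIcc hab).trans_eq (abs_of_pos (sub_pos.2 hxy)))
  unfold translationExtend
  rcases hproj.eq_or_lt with heq | hlt
  · rw [heq]
    linarith
  · have := hk hlt
    linarith

theorem surjective_translationExtend (hab : a ≤ b) {k : Icc a b → ℝ} (hk : Continuous k) :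
    Surjective (translationExtend hab k) := by
  have hcont : Continuous (translationExtend hab k) := by
    unfold translationExtend
    have : Continuous (projIcc a b hab) := continuous_projIcc
    fun_prop
  refine hcont.surjective ?_ ?_
  · refine (tendsto_atTop_add_const_right _ (k ⟨b, right_mem_Icc.2 hab⟩ - b) tendsto_id).congr' ?_
    filter_upwards [eventually_ge_atTop b] with x hx
    simp only [translationExtend, projIcc_of_right_le hab hx, id]
    ring
  · refine (tendsto_atBot_add_const_right _ (k ⟨a, left_mem_Icc.2 hab⟩ - a) tendsto_id).congr' ?_
    filter_upwards [eventually_le_atBot a] with x hx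
    simp only [translationExtend, projIcc_of_le_left hab hx, id]
    ring

/-- The fibre maps of a forced increasing interval map need not be onto; extending them to
increasing bijections of `ℝ` makes the dynamics invertible. -/
theorem ForcedIncreasing.exists_homeomorph_extension [TopologicalSpace Θ] (hab : a ≤ b)
    {α : Θ ≃ₜ Θ} {f : Θ × Icc a b → Θ × Icc a b} (hf : ForcedIncreasing α f) :
    ∃ G : Θ × ℝ ≃ₜ Θ × ℝ, Semiconj (Prod.map id Subtype.val) f G ∧
      ∀ p q, FiberLE (G p) (G q) ↔ FiberLE p q := by
  have hk : Continuous fun p : Θ × Icc a b => ((f p).2 : ℝ) :=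
    continuous_subtype_val.comp (continuous_snd.comp hf.1)
  let g (θ : Θ) : ℝ ≃o ℝ := StrictMono.orderIsoOfSurjective _
    (strictMono_translationExtend hab (k := fun x => (f (θ, x)).2) (hf.2.2 θ))
    (surjective_translationExtend hab (hk.comp (continuous_const.prodMk continuous_id)))
  let G := skewHomeomorph α g (continuous_translationExtend hab hk)
  refine ⟨G, fun p => Prod.ext (hf.2.1 p) ?_,
    FiberLE.iff_of_strictMono α.injective (fun _ => rfl) fun θ => (g θ).strictMono⟩
  exact (translationExtend_coe hab (fun x => ((f (p.1, x)).2 : ℝ)) p.2).symm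

end TranslationExtension

section IntegerIterates

variable {X Y : Type*} [TopologicalSpace X] [TopologicalSpace Y]

theorem zIter_toEquiv (g : X ≃ₜ X) (n : ℤ) : zIter g.toEquiv n = ⇑(g ^ n) := by
  let toPerm : (X ≃ₜ X) →* Equiv.Perm X := MonoidHom.mk' Homeomorph.toEquiv fun _ _ => rfl
  have hpow : toPerm (g ^ n) = toPerm g ^ n := map_zpow toPerm g n
  exact funext fun x => (DFunLike.congr_fun hpow x).symm

theorem semiconj_zpow {h : X → Y} {f : X ≃ₜ X} {g : Y ≃ₜ Y} (hfg : Semiconj h f g) (n : ℤ) :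
    Semiconj h ⇑(f ^ n) ⇑(g ^ n) := by
  have hfg_inv : Semiconj h ⇑f⁻¹ ⇑g⁻¹ := hfg.inverses_right f.right_inv g.left_inv
  induction n using Int.induction_on with
  | zero => exact fun _ => rfl
  | succ n ih =>
    rw [zpow_add_one, zpow_add_one]
    exact ih.comp_right hfg
  | pred n ih =>
    rw [zpow_sub_one, zpow_sub_one]
    exact ih.comp_right hfg_inv

theorem fiberLE_zpow_iff {Θ X : Type*} [TopologicalSpace Θ] [TopologicalSpace X] [LE X]
    {G : Θ × X ≃ₜ Θ × X} (hG : ∀ p q, FiberLE (G p) (G q) ↔ FiberLE p q) (n : ℤ) (p q : Θ × X) :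
    FiberLE ((G ^ n) p) ((G ^ n) q) ↔ FiberLE p q := by
  have hG_inv (p q : Θ × X) : FiberLE (G⁻¹ p) (G⁻¹ q) ↔ FiberLE p q := by
    rw [← hG]
    exact iff_of_eq (congrArg₂ FiberLE (G.apply_symm_apply p) (G.apply_symm_apply q))
  induction n using Int.induction_on generalizing p q with
  | zero => rfl
  | succ n ih =>
    rw [zpow_add_one]
    exact (ih (G p) (G q)).trans (hG p q)
  | pred n ih =>
    rw [zpow_sub_one]
    exact (ih (G⁻¹ p) (G⁻¹ q)).trans (hG_inv p q)

end IntegerIterates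

section DistRatio

open Metric Topology

variable {M : Type*} [PseudoMetricSpace M] {A B : Set M} {p q : M}

theorem div_add_le_div_add {x y x' y' : ℝ} (hx : 0 ≤ x) (hy' : 0 ≤ y') (hxx' : x ≤ x')
    (hyy' : y' ≤ y) : x / (x + y) ≤ x' / (x' + y') := by
  rcases hx.eq_or_lt with rfl | hx
  · rw [zero_div]
    positivity
  · rw [div_le_div_iff₀ (by linarith) (by linarith)]
    linarith [mul_le_mul hxx' hyy' hy' (hx.le.trans hxx')]

/-- The distance to `A` relative to the sum of the distances to `A` and `B`: a Urysohn function for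
two sets which may intersect. On `closure A ∩ closure B` it has the junk value `0 / 0 = 0`. -/
def distRatio (A B : Set M) (p : M) : unitInterval :=
  ⟨infDist p A / (infDist p A + infDist p B), unitInterval.div_mem infDist_nonneg
    (add_nonneg infDist_nonneg infDist_nonneg) (le_add_of_nonneg_right infDist_nonneg)⟩

theorem distRatio_mono (hA : infDist p A ≤ infDist q A) (hB : infDist q B ≤ infDist p B) :
    distRatio A B p ≤ distRatio A B q :=
  div_add_le_div_add infDist_nonneg infDist_nonneg hA hB

theorem distRatio_eq_zero (hp : p ∈ A) : distRatio A B p = 0 :=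
  Subtype.ext (by simp [distRatio, infDist_zero_of_mem hp])

theorem distRatio_eq_one (hA : IsClosed A) (hA' : A.Nonempty) (hpA : p ∉ A) (hpB : p ∈ B) :
    distRatio A B p = 1 := by
  have hpos : 0 < infDist p A := (hA.notMem_iff_infDist_pos hA').1 hpA
  exact Subtype.ext (by simp [distRatio, infDist_zero_of_mem hpB, hpos.ne'])

theorem continuousAt_distRatio (hA : IsClosed A) (hA' : A.Nonempty) (hB : IsClosed B)
    (hB' : B.Nonempty) (hp : p ∉ A ∩ B) : ContinuousAt (distRatio A B) p := by
  have hpos : 0 < infDist p A + infDist p B := by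
    by_cases hpA : p ∈ A
    · have := (hB.notMem_iff_infDist_pos hB').1 fun hpB => hp ⟨hpA, hpB⟩
      linarith [infDist_nonneg (x := p) (s := A)]
    · have := (hA.notMem_iff_infDist_pos hA').1 hpA
      linarith [infDist_nonneg (x := p) (s := B)]
  have hA_cont : Continuous fun q => infDist q A := continuous_infDist_pt A
  have hB_cont : Continuous fun q => infDist q B := continuous_infDist_pt B
  exact IsInducing.subtypeVal.continuousAt_iff.2
    (hA_cont.continuousAt.div (hA_cont.add hB_cont).continuousAt hpos.ne')

theorem infDist_le_infDist_of_mapsTo {τ : M → M} (hτ : LipschitzWith 1 τ) (hτA : MapsTo τ A A)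
    (hA : A.Nonempty) (p : M) : infDist (τ p) A ≤ infDist p A :=
  (le_infDist hA).2 fun a ha =>
    (infDist_le_dist_of_mem (hτA ha)).trans (by simpa using hτ.dist_le_mul p a)

end DistRatio

section JumpFunction

variable {Θ X : Type*} [TopologicalSpace Θ] [TopologicalSpace X] [LE X]

/-- A fibrewise non-decreasing function whose only discontinuity is a jump at `c`: on the fibre of
`c` it is `0` below `c` and `1` above. Its value at `c` is irrelevant. -/
structure IsJumpFunction (c : Θ × X) (φ : Θ × X → unitInterval) : Prop where
  continuousAt : ∀ p, p ≠ c → ContinuousAt φ p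
  mono : ∀ p q, FiberLE p q → φ p ≤ φ q
  eq_zero : ∀ p, FiberLE p c → p ≠ c → φ p = 0
  eq_one : ∀ p, FiberLE c p → p ≠ c → φ p = 1

theorem IsJumpFunction.comp {Θ' X' : Type*} [TopologicalSpace Θ'] [TopologicalSpace X'] [LE X']
    {c : Θ × X} {φ : Θ × X → unitInterval} (hφ : IsJumpFunction c φ) {g : Θ' × X' → Θ × X}
    (hg : Continuous g) (hgi : Injective g) (hgm : ∀ p q, FiberLE p q → FiberLE (g p) (g q))
    {c' : Θ' × X'} (hc : g c' = c) : IsJumpFunction c' (φ ∘ g) where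
  continuousAt p hp := (hφ.continuousAt (g p) (hc ▸ hgi.ne hp)).comp hg.continuousAt
  mono p q hpq := hφ.mono _ _ (hgm p q hpq)
  eq_zero p hpc hp := hφ.eq_zero _ (hc ▸ hgm p c' hpc) (hc ▸ hgi.ne hp)
  eq_one p hcp hp := hφ.eq_one _ (hc ▸ hgm c' p hcp) (hc ▸ hgi.ne hp)

end JumpFunction

section JumpAlongCurve

open Metric

/-- The points over `U` that lie on or below the graph of `γ`. -/
def lowerRegion {Θ : Type*} (U : Set Θ) (γ : Θ → ℝ) : Set (Θ × ℝ) := {p | p.1 ∈ U ∧ p.2 ≤ γ p.1}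

/-- The points over `V` that lie on or above the graph of `γ`. -/
def upperRegion {Θ : Type*} (V : Set Θ) (γ : Θ → ℝ) : Set (Θ × ℝ) := {p | p.1 ∈ V ∧ γ p.1 ≤ p.2}

theorem isClosed_lowerRegion {Θ : Type*} [TopologicalSpace Θ] {U : Set Θ} (hU : IsClosed U)
    {γ : Θ → ℝ} (hγ : Continuous γ) : IsClosed (lowerRegion U γ) :=
  (hU.preimage continuous_fst).inter (isClosed_le continuous_snd (hγ.comp continuous_fst))

theorem isClosed_upperRegion {Θ : Type*} [TopologicalSpace Θ] {V : Set Θ} (hV : IsClosed V)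
    {γ : Θ → ℝ} (hγ : Continuous γ) : IsClosed (upperRegion V γ) :=
  (hV.preimage continuous_fst).inter (isClosed_le (hγ.comp continuous_fst) continuous_snd)

variable {Θ : Type*} [PseudoMetricSpace Θ] {U V : Set Θ} {γ : Θ → ℝ}

theorem lipschitzWith_vertical_translation (s : ℝ) :
    LipschitzWith 1 fun p : Θ × ℝ => (p.1, p.2 + s) :=
  LipschitzWith.of_dist_le_mul fun p q => by simp [Prod.dist_eq]

theorem infDist_lowerRegion_mono (hU : (lowerRegion U γ).Nonempty) {p q : Θ × ℝ}
    (hpq : FiberLE p q) : infDist p (lowerRegion U γ) ≤ infDist q (lowerRegion U γ) := by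
  have hmaps : MapsTo (fun r : Θ × ℝ => (r.1, r.2 + (p.2 - q.2))) (lowerRegion U γ)
      (lowerRegion U γ) := fun r hr =>
    ⟨hr.1, (add_le_of_nonpos_right (sub_nonpos.2 hpq.2)).trans hr.2⟩
  have := infDist_le_infDist_of_mapsTo (lipschitzWith_vertical_translation _) hmaps hU q
  rwa [add_sub_cancel, ← hpq.1] at this

theorem infDist_upperRegion_anti (hV : (upperRegion V γ).Nonempty) {p q : Θ × ℝ}
    (hpq : FiberLE p q) : infDist q (upperRegion V γ) ≤ infDist p (upperRegion V γ) := by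
  have hmaps : MapsTo (fun r : Θ × ℝ => (r.1, r.2 + (q.2 - p.2))) (upperRegion V γ)
      (upperRegion V γ) := fun r hr =>
    ⟨hr.1, hr.2.trans (le_add_of_nonneg_right (sub_nonneg.2 hpq.2))⟩
  have := infDist_le_infDist_of_mapsTo (lipschitzWith_vertical_translation _) hmaps hV p
  rwa [add_sub_cancel, hpq.1] at this

theorem isJumpFunction_distRatio (hU : IsClosed U) (hV : IsClosed V) (hγ : Continuous γ) {θs : Θ}
    (hUV : U ∩ V = {θs}) :
    IsJumpFunction (θs, γ θs) (distRatio (lowerRegion U γ) (upperRegion V γ)) := by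
  obtain ⟨hsU, hsV⟩ : θs ∈ U ∩ V := hUV ▸ mem_singleton θs
  have hA := isClosed_lowerRegion hU hγ
  have hB := isClosed_upperRegion hV hγ
  have hA' : (lowerRegion U γ).Nonempty := ⟨(θs, γ θs), hsU, le_rfl⟩
  have hB' : (upperRegion V γ).Nonempty := ⟨(θs, γ θs), hsV, le_rfl⟩
  have hAB : ∀ p ∈ lowerRegion U γ ∩ upperRegion V γ, p = (θs, γ θs) := by
    rintro ⟨θ, x⟩ ⟨⟨hθU, hx⟩, hθV, hx'⟩
    obtain rfl : θ = θs := hUV.subset ⟨hθU, hθV⟩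
    exact Prod.ext rfl (le_antisymm hx hx')
  refine ⟨fun p hp => continuousAt_distRatio hA hA' hB hB' (mt (hAB p) hp),
    fun p q hpq => distRatio_mono (infDist_lowerRegion_mono hA' hpq)
      (infDist_upperRegion_anti hB' hpq), ?_, ?_⟩
  · rintro ⟨θ, x⟩ ⟨rfl, hx⟩ -
    exact distRatio_eq_zero ⟨hsU, hx⟩
  · rintro ⟨θ, x⟩ ⟨rfl, hx⟩ hne
    have hmem : (θs, x) ∈ upperRegion V γ := ⟨hsV, hx⟩
    exact distRatio_eq_one hA hA' (fun h => hne (hAB _ ⟨h, hmem⟩)) hmem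

end JumpAlongCurve

section NoExtension

open Filter Topology

theorem exists_injective_tendsto_of_neBot {Θ : Type*} [MetricSpace Θ] (θs : Θ)
    [(𝓝[≠] θs).NeBot] :
    ∃ u : ℕ → Θ, Injective u ∧ (∀ n, u n ≠ θs) ∧ Tendsto u atTop (𝓝 θs) := by
  have hclosure : (0 : ℝ) ∈ closure ((dist · θs) '' {θs}ᶜ) := by
    refine dist_self θs ▸ image_closure_subset_closure_image (continuous_id.dist continuous_const)
      (mem_image_of_mem _ ?_)
    exact mem_closure_iff_nhdsWithin_neBot.2 ‹_›
  have hglb : IsGLB ((dist · θs) '' {θs}ᶜ) 0 :=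
    isGLB_of_mem_closure (forall_mem_image.2 fun _ _ => dist_nonneg) hclosure
  have hnotMem : (0 : ℝ) ∉ (dist · θs) '' {θs}ᶜ := by
    rintro ⟨θ, hθ, h0⟩
    exact hθ (dist_eq_zero.1 h0)
  obtain ⟨d, hd_anti, -, hd_lim, hd_mem⟩ := hglb.exists_seq_strictAnti_tendsto_of_notMem hnotMem
    (closure_nonempty_iff.1 ⟨0, hclosure⟩)
  choose u hu_ne hu_dist using hd_mem
  refine ⟨u, fun m n hmn => hd_anti.injective ?_, hu_ne, tendsto_iff_dist_tendsto_zero.2 ?_⟩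
  · rw [← hu_dist, ← hu_dist, hmn]
  · simpa only [hu_dist] using hd_lim

theorem exists_isClosed_inter_eq_singleton {Θ : Type*} [MetricSpace Θ] (θs : Θ)
    [(𝓝[≠] θs).NeBot] :
    ∃ U V : Set Θ, IsClosed U ∧ IsClosed V ∧ U ∩ V = {θs} ∧
      θs ∈ closure (U \ {θs}) ∧ θs ∈ closure (V \ {θs}) := by
  obtain ⟨u, hu_inj, hu_ne, hu⟩ := exists_injective_tendsto_of_neBot θs
  have hclosed {k : ℕ → ℕ} (hk : StrictMono k) : IsClosed (insert θs (range (u ∘ k))) :=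
    (hu.comp hk.tendsto_atTop).isCompact_insert_range.isClosed
  have hmem {k : ℕ → ℕ} (hk : StrictMono k) :
      θs ∈ closure (insert θs (range (u ∘ k)) \ {θs}) :=
    mem_closure_of_tendsto (hu.comp hk.tendsto_atTop)
      (Eventually.of_forall fun n => ⟨mem_insert_of_mem _ (mem_range_self n), hu_ne (k n)⟩)
  have heven : StrictMono fun n : ℕ => 2 * n := fun m n hmn => by dsimp only; omega
  have hodd : StrictMono fun n : ℕ => 2 * n + 1 := fun m n hmn => by dsimp only; omega
  refine ⟨_, _, hclosed heven, hclosed hodd, ?_, hmem heven, hmem hodd⟩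
  rw [← insert_inter_distrib]
  have hdisj : range (u ∘ fun n => 2 * n) ∩ range (u ∘ fun n => 2 * n + 1) = ∅ := by
    refine disjoint_iff_inter_eq_empty.1 (disjoint_left.2 ?_)
    rintro _ ⟨m, rfl⟩ ⟨n, hn⟩
    have : 2 * n + 1 = 2 * m := hu_inj hn
    omega
  rw [hdisj, insert_empty_eq]

theorem not_continuous_of_eqOn_diff {Θ Z : Type*} [TopologicalSpace Θ] [TopologicalSpace Z]
    [T1Space Z] {U V : Set Θ} {θs : Θ} (hU : θs ∈ closure (U \ {θs}))
    (hV : θs ∈ closure (V \ {θs})) {g : Θ → Z} {y z : Z} (hyz : y ≠ z)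
    (hgU : ∀ θ ∈ U \ {θs}, g θ = y) (hgV : ∀ θ ∈ V \ {θs}, g θ = z) : ¬ Continuous g := by
  intro hg
  have hy : g θs = y := closure_minimal hgU (isClosed_singleton.preimage hg) hU
  have hz : g θs = z := closure_minimal hgV (isClosed_singleton.preimage hg) hV
  exact hyz (hy.symm.trans hz)

theorem exists_isJumpFunction {Θ : Type*} [MetricSpace Θ] (θs : Θ) [(𝓝[≠] θs).NeBot]
    {γ : Θ → ℝ} (hγ : Continuous γ) :
    ∃ φ : Θ × ℝ → unitInterval, IsJumpFunction (θs, γ θs) φ ∧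
      ∀ g : Θ → unitInterval, (∀ θ ≠ θs, g θ = φ (θ, γ θ)) → ¬ Continuous g := by
  obtain ⟨U, V, hU, hV, hUV, hsU, hsV⟩ := exists_isClosed_inter_eq_singleton θs
  have hA' : (lowerRegion U γ).Nonempty :=
    ⟨(θs, γ θs), inter_subset_left (hUV.superset rfl), le_rfl⟩
  refine ⟨distRatio (lowerRegion U γ) (upperRegion V γ), isJumpFunction_distRatio hU hV hγ hUV,
    fun g hg => not_continuous_of_eqOn_diff hsU hsV zero_ne_one ?_ ?_⟩
  · rintro θ ⟨hθU, hne⟩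
    exact (hg θ hne).trans (distRatio_eq_zero ⟨hθU, le_rfl⟩)
  · rintro θ ⟨hθV, hne⟩
    exact (hg θ hne).trans (distRatio_eq_one (isClosed_lowerRegion hU hγ) hA'
      (fun hθ => hne (hUV.subset ⟨hθ.1, hθV⟩)) ⟨hθV, le_rfl⟩)

end NoExtension

section JumpFamily

open Topology

theorem exists_equivariant_jumpFamily {Θ : Type*} [MetricSpace Θ] {a b : ℝ} (hab : a ≤ b)
    {α : Θ ≃ₜ Θ} {f : Θ × Icc a b → Θ × Icc a b} (hf : ForcedIncreasing α f)
    {γ : Θ → Icc a b} (hγ : Continuous γ) (hγinv : ∀ θ, f (θ, γ θ) = (α θ, γ (α θ)))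
    (θs : Θ) [(𝓝[≠] θs).NeBot] :
    ∃ φ : ℤ → Θ × Icc a b → unitInterval,
      (∀ n, IsJumpFunction ((α ^ n) θs, γ ((α ^ n) θs)) (φ n)) ∧
      (∀ n p, φ (n + 1) (f p) = φ n p) ∧
      ∀ g : Θ → unitInterval, (∀ θ ≠ θs, g θ = φ 0 (θ, γ θ)) → ¬ Continuous g := by
  obtain ⟨G, hfG, hG⟩ := hf.exists_homeomorph_extension hab
  obtain ⟨φ, hφ, hφ_ext⟩ := exists_isJumpFunction θs (continuous_subtype_val.comp hγ)
  let ι : Θ × Icc a b → Θ × ℝ := Prod.map id Subtype.val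
  have hι : Continuous ι := continuous_id.prodMap continuous_subtype_val
  have hι_inj : Injective ι := injective_id.prodMap Subtype.val_injective
  have hcurve (n : ℤ) : Semiconj (fun θ => ι (θ, γ θ)) ⇑(α ^ n) ⇑(G ^ n) :=
    semiconj_zpow (fun θ => (congrArg ι (hγinv θ)).symm.trans (hfG (θ, γ θ))) n
  have hcurve_inv (n : ℤ) : (G ^ (-n)) (ι ((α ^ n) θs, γ ((α ^ n) θs))) = (θs, (γ θs : ℝ)) := by
    rw [← hcurve (-n) ((α ^ n) θs), zpow_neg]
    exact congrArg (fun θ => ι (θ, γ θ)) ((α ^ n).symm_apply_apply θs)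
  refine ⟨fun n => φ ∘ fun p => (G ^ (-n)) (ι p), fun n => ?_, fun n p => ?_, hφ_ext⟩
  · exact hφ.comp ((G ^ (-n)).continuous.comp hι) ((G ^ (-n)).injective.comp hι_inj)
      (fun p q hpq => (fiberLE_zpow_iff hG (-n) _ _).2 hpq) (hcurve_inv n)
  · have hstep : G ^ (-(n + 1)) * G = G ^ (-n) := by
      rw [← zpow_add_one, neg_add, neg_add_cancel_right]
    simp only [comp_apply, ι, hfG p, ← hstep, Homeomorph.mul_apply]

end JumpFamily

section FiberChart

theorem ordConnected_of_isClosed_of_exists_between {R : Type*} [ConditionallyCompleteLinearOrder R]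
    [TopologicalSpace R] [OrderTopology R] {K : Set R} (hK : IsClosed K)
    (hbetween : ∀ x ∈ K, ∀ y ∈ K, x < y → ∃ z ∈ K, x < z ∧ z < y) : K.OrdConnected := by
  refine ⟨fun x hx y hy z ⟨hxz, hzy⟩ => ?_⟩
  by_contra hz
  have hbelow : IsGreatest (K ∩ Icc x z) (sSup (K ∩ Icc x z)) :=
    (hK.inter isClosed_Icc).isGreatest_csSup ⟨x, hx, le_rfl, hxz⟩ ⟨z, fun _ hw => hw.2.2⟩
  have habove : IsLeast (K ∩ Icc z y) (sInf (K ∩ Icc z y)) :=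
    (hK.inter isClosed_Icc).isLeast_csInf ⟨y, hy, hzy, le_rfl⟩ ⟨z, fun _ hw => hw.2.1⟩
  generalize sSup (K ∩ Icc x z) = p at hbelow
  generalize sInf (K ∩ Icc z y) = q at habove
  have hpz : p < z := hbelow.1.2.2.lt_of_ne fun h => hz (h ▸ hbelow.1.1)
  have hzq : z < q := habove.1.2.1.lt_of_ne fun h => hz (h ▸ habove.1.1)
  obtain ⟨w, hwK, hpw, hwq⟩ := hbetween p hbelow.1.1 q habove.1.1 (hpz.trans hzq)
  rcases le_total w z with hwz | hzw
  · exact hpw.not_ge (hbelow.2 ⟨hwK, hbelow.1.2.1.trans hpw.le, hwz⟩)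
  · exact hwq.not_ge (habove.2 ⟨hwK, hzw, hwq.le.trans habove.1.2.2⟩)

theorem exists_continuous_strictMono_real (ι : Type*) [Countable ι] :
    ∃ S : (ι → unitInterval) → ℝ, Continuous S ∧ StrictMono S := by
  obtain ⟨w, hw_pos, r, hw_sum, -⟩ := NNReal.exists_pos_sum_of_countable one_ne_zero ι
  have hsum : Summable fun i => (w i : ℝ) := NNReal.summable_coe.2 hw_sum.summable
  have hbound (i : ι) (t : ι → unitInterval) : ‖(w i : ℝ) * t i‖ ≤ w i := by
    rw [norm_mul, NNReal.norm_eq, Real.norm_of_nonneg (t i).2.1]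
    exact mul_le_of_le_one_right (w i).2 (t i).2.2
  have hsummable (t : ι → unitInterval) : Summable fun i => (w i : ℝ) * t i :=
    hsum.of_norm_bounded fun i => hbound i t
  refine ⟨fun t => ∑' i, (w i : ℝ) * t i, continuous_tsum (fun i => by fun_prop) hsum hbound,
    fun t t' htt' => ?_⟩
  obtain ⟨hle, i, hlt⟩ := Pi.lt_def.1 htt'
  exact (hsummable t).tsum_lt_tsum (fun j => mul_le_mul_of_nonneg_left (hle j) (w j).2)
    (mul_lt_mul_of_pos_left hlt (hw_pos i)) (hsummable t')

theorem le_iff_le_of_isChain {L : Type*} [PartialOrder L] {K : Set L} (hK : IsChain (· ≤ ·) K)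
    {S : L → ℝ} (hS : StrictMono S) {x y : L} (hx : x ∈ K) (hy : y ∈ K) : S x ≤ S y ↔ x ≤ y := by
  refine ⟨fun hxy => ?_, fun hxy => hS.monotone hxy⟩
  rcases hK.total hx hy with h | h
  · exact h
  · rcases h.eq_or_lt with rfl | hlt
    · exact le_rfl
    · exact absurd (hS hlt) hxy.not_gt

theorem image_eq_Icc_of_isChain {L : Type*} [PartialOrder L] [TopologicalSpace L] {K : Set L}
    (hK : IsCompact K) (hchain : IsChain (· ≤ ·) K) [DenselyOrdered K] {l u : L} (hl : IsLeast K l)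
    (hu : IsGreatest K u) {S : L → ℝ} (hSc : Continuous S) (hSm : StrictMono S) :
    S '' K = Icc (S l) (S u) := by
  refine Subset.antisymm ?_ ?_
  · rintro _ ⟨x, hx, rfl⟩
    exact ⟨hSm.monotone (hl.2 hx), hSm.monotone (hu.2 hx)⟩
  · have hconn : (S '' K).OrdConnected := by
      refine ordConnected_of_isClosed_of_exists_between (hK.image hSc).isClosed ?_
      rintro _ ⟨x, hx, rfl⟩ _ ⟨y, hy, rfl⟩ hxy
      have hlt : (⟨x, hx⟩ : K) < ⟨y, hy⟩ :=
        lt_of_le_not_ge ((le_iff_le_of_isChain hchain hSm hx hy).1 hxy.le)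
          fun h => hxy.not_ge (hSm.monotone h)
      obtain ⟨z, hxz, hzy⟩ := exists_between hlt
      exact ⟨S z, mem_image_of_mem S z.2, hSm hxz, hSm hzy⟩
    exact hconn.out (mem_image_of_mem S hl.1) (mem_image_of_mem S hu.1)

variable {Θ L X : Type*} [TopologicalSpace Θ] [TopologicalSpace L] [TopologicalSpace X]

/-- A global chart of a subset of `Θ × L`: a homeomorphism onto the product `Θ × X` which preserves
base points and the order of the fibres. -/
structure IsFiberChart [LE L] [LE X] {E : Set (Θ × L)} (Y : E ≃ₜ Θ × X) : Prop where
  fst_apply : ∀ e, (Y e).1 = e.1.1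
  fiberLE_iff : ∀ e e', FiberLE (Y e) (Y e') ↔ FiberLE e.1 e'.1

theorem isCompact_fiber [T1Space Θ] {E : Set (Θ × L)} (hE : IsCompact E) (θ : Θ) :
    IsCompact (Prod.mk θ ⁻¹' E) := by
  have himage : Prod.mk θ ⁻¹' E = Prod.snd '' (E ∩ Prod.fst ⁻¹' {θ}) := by
    ext x
    simp
  exact himage ▸ (hE.inter_right (isClosed_singleton.preimage continuous_fst)).image continuous_snd

theorem exists_isFiberChart_of_surjective [T2Space Θ] [T2Space X] [PartialOrder L] [Preorder X]
    {E : Set (Θ × L)} (hE : IsCompact E) {Y : E → Θ × X} (hY_cont : Continuous Y)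
    (hY_surj : Surjective Y) (hY_fst : ∀ e, (Y e).1 = e.1.1)
    (hY_le : ∀ e e', FiberLE (Y e) (Y e') ↔ FiberLE e.1 e'.1) :
    ∃ Y : E ≃ₜ Θ × X, IsFiberChart Y := by
  have hY_inj : Injective Y := fun e e' h => Subtype.ext <|
    ((hY_le e e').1 (h ▸ .refl _)).antisymm ((hY_le e' e).1 (h ▸ .refl _))
  have := isCompact_iff_compactSpace.1 hE
  exact ⟨hY_cont.homeoOfEquivCompactToT2 (f := Equiv.ofBijective Y ⟨hY_inj, hY_surj⟩),
    hY_fst, hY_le⟩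

theorem exists_isFiberChart_unitInterval [T2Space Θ] [PartialOrder L] {E : Set (Θ × L)}
    (hE : IsCompact E) (hchain : ∀ θ, IsChain (· ≤ ·) (Prod.mk θ ⁻¹' E))
    (hdense : ∀ θ, DenselyOrdered (Prod.mk θ ⁻¹' E)) {l u : Θ → L} (hl : Continuous l)
    (hu : Continuous u) (hleast : ∀ θ, IsLeast (Prod.mk θ ⁻¹' E) (l θ))
    (hgreatest : ∀ θ, IsGreatest (Prod.mk θ ⁻¹' E) (u θ)) (hlu : ∀ θ, l θ < u θ)
    {S : L → ℝ} (hSc : Continuous S) (hSm : StrictMono S) :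
    ∃ Y : E ≃ₜ Θ × unitInterval, IsFiberChart Y := by
  have hlength (θ : Θ) : 0 < S (u θ) - S (l θ) := sub_pos.2 (hSm (hlu θ))
  have hfiber (θ : Θ) : S '' (Prod.mk θ ⁻¹' E) = Icc (S (l θ)) (S (u θ)) := by
    have := hdense θ
    exact image_eq_Icc_of_isChain (isCompact_fiber hE θ) (hchain θ) (hleast θ) (hgreatest θ) hSc
      hSm
  have hmem (e : E) : S e.1.2 ∈ Icc (S (l e.1.1)) (S (u e.1.1)) :=
    (hfiber e.1.1).subset (mem_image_of_mem S e.2)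
  let Y (e : E) : Θ × unitInterval := (e.1.1,
    ⟨(S e.1.2 - S (l e.1.1)) / (S (u e.1.1) - S (l e.1.1)), unitInterval.div_mem
      (sub_nonneg.2 (hmem e).1) (hlength _).le (sub_le_sub_right (hmem e).2 _)⟩)
  have hY_le (e e' : E) : FiberLE (Y e) (Y e') ↔ FiberLE e.1 e'.1 := by
    obtain ⟨⟨θ, x⟩, hx⟩ := e
    obtain ⟨⟨θ', y⟩, hy⟩ := e'
    refine and_congr_right ?_
    rintro rfl
    exact ((div_le_div_iff_of_pos_right (hlength θ)).trans (sub_le_sub_iff_right _)).trans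
      (le_iff_le_of_isChain (hchain θ) hSm hx hy)
  have hY_cont : Continuous Y := by
    refine Continuous.prodMk (by fun_prop) (Continuous.subtype_mk ?_ _)
    exact Continuous.div (by fun_prop) (by fun_prop) fun e => (hlength _).ne'
  have hY_surj : Surjective Y := by
    rintro ⟨θ, t⟩
    obtain ⟨x, hx, hSx⟩ : S (l θ) + t * (S (u θ) - S (l θ)) ∈ S '' (Prod.mk θ ⁻¹' E) := by
      rw [hfiber]
      constructor <;> nlinarith [t.2.1, t.2.2, hlength θ]
    refine ⟨⟨(θ, x), hx⟩, Prod.ext rfl (Subtype.ext ?_)⟩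
    simp only [Y, hSx, add_sub_cancel_left, mul_div_cancel_right₀ _ (hlength θ).ne']
  exact exists_isFiberChart_of_surjective hE hY_cont hY_surj (fun _ => rfl) hY_le

theorem IsFiberChart.trans_orderIso [PartialOrder L] [PartialOrder X] [OrderTopology X]
    {X' : Type*} [TopologicalSpace X'] [PartialOrder X'] [OrderTopology X'] {E : Set (Θ × L)}
    {Y : E ≃ₜ Θ × X} (hY : IsFiberChart Y) (e : X ≃o X') :
    IsFiberChart (Y.trans ((Homeomorph.refl Θ).prodCongr e.toHomeomorph)) where
  fst_apply := hY.fst_apply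
  fiberLE_iff p q := (and_congr_right fun _ => e.le_iff_le).trans (hY.fiberLE_iff p q)

theorem nonempty_orderIso_unitInterval {a b : ℝ} (hab : a < b) :
    Nonempty (Icc a b ≃o unitInterval) := by
  refine ⟨⟨(iccHomeoI a b hab).toEquiv, fun {x y} => ?_⟩⟩
  exact (div_le_div_iff_of_pos_right (sub_pos.2 hab)).trans (sub_le_sub_iff_right a)

end FiberChart

section BlowUp

variable {Θ X ι : Type*}

/-- The blow-up of `Θ × X` at the points `c n`: the graph of `(φ n)ₙ`, with the point over each
`c n` replaced by the segment on which the coordinate `n` is free. Its fibres carry the product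
order of `X × (ι → unitInterval)`. -/
def blowUp (c : ι → Θ × X) (φ : ι → Θ × X → unitInterval) : Set (Θ × X × (ι → unitInterval)) :=
  {e | ∀ n, (e.1, e.2.1) ≠ c n → e.2.2 n = φ n (e.1, e.2.1)}

/-- The projection of the blow-up to `Θ × X`. -/
def basePoint (e : Θ × X × (ι → unitInterval)) : Θ × X := (e.1, e.2.1)

/-- The point of the graph of `(φ n)ₙ` over `p`. -/
def graphLift (φ : ι → Θ × X → unitInterval) (p : Θ × X) : Θ × X × (ι → unitInterval) :=
  (p.1, p.2, fun n => φ n p)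

/-- The point with `n`-th coordinate `s` of the segment into which the point `c n` is blown up. -/
def segmentLift [DecidableEq ι] (c : ι → Θ × X) (φ : ι → Θ × X → unitInterval) (n : ι)
    (s : unitInterval) : Θ × X × (ι → unitInterval) :=
  ((c n).1, (c n).2, update (fun m => φ m (c n)) n s)

variable {c : ι → Θ × X} {φ : ι → Θ × X → unitInterval}

theorem graphLift_mem_blowUp (p : Θ × X) : graphLift φ p ∈ blowUp c φ := fun _ _ => rfl

theorem segmentLift_mem_blowUp [DecidableEq ι] (n : ι) (s : unitInterval) :
    segmentLift c φ n s ∈ blowUp c φ := fun m hm => by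
  have hmn : m ≠ n := ne_of_apply_ne c (Ne.symm hm)
  simp only [segmentLift, update_of_ne hmn]

theorem eq_graphLift {e : Θ × X × (ι → unitInterval)} (he : e ∈ blowUp c φ)
    (hc : basePoint e ∉ range c) : e = graphLift φ (basePoint e) :=
  Prod.ext rfl (Prod.ext rfl (funext fun n => he n fun h => hc ⟨n, h.symm⟩))

theorem jumps_eq_update [DecidableEq ι] (hc : Injective c) {θ : Θ} {x : X}
    {t s : ι → unitInterval} (ht : (θ, x, t) ∈ blowUp c φ) (hs : (θ, x, s) ∈ blowUp c φ) {n : ι}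
    (hn : (θ, x) = c n) : s = update t n (s n) := by
  refine eq_update_iff.2 ⟨rfl, fun m hm => ?_⟩
  have hne : (θ, x) ≠ c m := fun h => hm (hc (h.symm.trans hn))
  exact (hs m hne).trans (ht m hne).symm

theorem eq_segmentLift [DecidableEq ι] (hc : Injective c) {e : Θ × X × (ι → unitInterval)}
    (he : e ∈ blowUp c φ) {n : ι} (hn : basePoint e = c n) :
    e = segmentLift c φ n (e.2.2 n) := by
  unfold segmentLift
  rw [← hn]
  exact Prod.ext rfl (Prod.ext rfl (jumps_eq_update hc (graphLift_mem_blowUp _) he hn))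

theorem jumps_le_total (hc : Injective c) {θ : Θ} {x : X} {t s : ι → unitInterval}
    (ht : (θ, x, t) ∈ blowUp c φ) (hs : (θ, x, s) ∈ blowUp c φ) : t ≤ s ∨ s ≤ t := by
  classical
  by_cases hx : (θ, x) ∈ range c
  · obtain ⟨n, hn⟩ := hx
    rw [jumps_eq_update hc ht hs hn.symm, le_update_self_iff, update_le_self_iff]
    exact le_total _ _
  · refine Or.inl (fun n => ?_)
    have hne : (θ, x) ≠ c n := fun h => hx ⟨n, h.symm⟩
    exact ((ht n hne).trans (hs n hne).symm).le

theorem exists_between_jumps (hc : Injective c) {θ : Θ} {x : X} {t s : ι → unitInterval}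
    (ht : (θ, x, t) ∈ blowUp c φ) (hs : (θ, x, s) ∈ blowUp c φ) (hts : t < s) :
    ∃ r, (θ, x, r) ∈ blowUp c φ ∧ t < r ∧ r < s := by
  classical
  obtain ⟨-, n, hn⟩ := Pi.lt_def.1 hts
  have hx : (θ, x) = c n := by
    by_contra hne
    exact hn.ne ((ht n hne).trans (hs n hne).symm)
  obtain ⟨r, htr, hrs⟩ := exists_between hn
  refine ⟨update t n r, fun m hm => ?_, lt_update_self_iff.2 htr, ?_⟩
  · exact (update_of_ne (ne_of_apply_ne c (hx ▸ hm.symm)) _ _).trans (ht m hm)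
  · rw [jumps_eq_update hc ht hs hx]
    exact update_lt_update_iff.2 hrs

theorem isClosed_setOf_ne_imp_eq {M Z : Type*} [TopologicalSpace M] [T1Space M]
    [TopologicalSpace Z] [T2Space Z] {p₀ : M} {φ : M → Z} (hφ : ∀ p, p ≠ p₀ → ContinuousAt φ p) :
    IsClosed {q : M × Z | q.1 ≠ p₀ → q.2 = φ q.1} := by
  refine isOpen_compl_iff.1 (isOpen_iff_mem_nhds.2 fun q hq => ?_)
  obtain ⟨hq_ne, hq_φ⟩ := Classical.not_imp.1 hq
  have hφq : ContinuousAt (fun r : M × Z => φ r.1) q := (hφ q.1 hq_ne).comp continuousAt_fst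
  filter_upwards [continuousAt_fst.eventually_ne hq_ne,
    (continuousAt_snd.prodMk hφq).eventually (isClosed_diagonal.isOpen_compl.mem_nhds hq_φ)]
    with r hr_ne hr_φ hr
  exact hr_φ (hr hr_ne)

section Order

variable [LinearOrder X]

theorem fiberLE_basePoint {e e' : Θ × X × (ι → unitInterval)} (h : FiberLE e e') :
    FiberLE (basePoint e) (basePoint e') := ⟨h.1, h.2.1⟩

theorem fiberLE_segmentLift_iff [DecidableEq ι] {n : ι} {s s' : unitInterval} :
    FiberLE (segmentLift c φ n s) (segmentLift c φ n s') ↔ s ≤ s' := by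
  simp [FiberLE, segmentLift]

theorem basePoint_eq_iff_mem_segment [DecidableEq ι] (hc : Injective c)
    {e : Θ × X × (ι → unitInterval)} (he : e ∈ blowUp c φ) (n : ι) :
    basePoint e = c n ↔
      FiberLE (segmentLift c φ n 0) e ∧ FiberLE e (segmentLift c φ n 1) := by
  refine ⟨fun hn => ?_, fun ⟨h0, h1⟩ =>
    (fiberLE_basePoint h1).antisymm (q := c n) (fiberLE_basePoint h0)⟩
  rw [eq_segmentLift hc he hn]
  exact ⟨fiberLE_segmentLift_iff.2 bot_le, fiberLE_segmentLift_iff.2 le_top⟩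

variable [TopologicalSpace Θ] [TopologicalSpace X]

theorem jumps_le_of_lt (hφ : ∀ n, IsJumpFunction (c n) (φ n)) {θ : Θ} {x y : X}
    {t s : ι → unitInterval} (hx : (θ, x, t) ∈ blowUp c φ) (hy : (θ, y, s) ∈ blowUp c φ)
    (hxy : x < y) : t ≤ s := by
  intro n
  have hle : FiberLE (θ, x) (θ, y) := ⟨rfl, hxy.le⟩
  have hne : (θ, x) ≠ (θ, y) := fun h => hxy.ne (congrArg Prod.snd h)
  by_cases hxc : (θ, x) = c n
  · have hyc : (θ, y) ≠ c n := hxc ▸ hne.symm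
    exact le_top.trans_eq ((hy n hyc).trans ((hφ n).eq_one _ (hxc ▸ hle) hyc)).symm
  · by_cases hyc : (θ, y) = c n
    · exact ((hx n hxc).trans ((hφ n).eq_zero _ (hyc ▸ hle) hxc)).trans_le bot_le
    · exact (hx n hxc).trans_le (((hφ n).mono _ _ hle).trans_eq (hy n hyc).symm)

theorem isChain_fiber_blowUp (hc : Injective c) (hφ : ∀ n, IsJumpFunction (c n) (φ n)) (θ : Θ) :
    IsChain (· ≤ ·) (Prod.mk θ ⁻¹' blowUp c φ) := by
  rintro ⟨x, t⟩ ht ⟨y, s⟩ hs -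
  rcases lt_trichotomy x y with hxy | rfl | hyx
  · exact Or.inl ⟨hxy.le, jumps_le_of_lt hφ ht hs hxy⟩
  · exact (jumps_le_total hc ht hs).imp (⟨le_rfl, ·⟩) (⟨le_rfl, ·⟩)
  · exact Or.inr ⟨hyx.le, jumps_le_of_lt hφ hs ht hyx⟩

theorem denselyOrdered_fiber_blowUp [DenselyOrdered X] (hc : Injective c)
    (hφ : ∀ n, IsJumpFunction (c n) (φ n)) (θ : Θ) :
    DenselyOrdered (Prod.mk θ ⁻¹' blowUp c φ) := by
  refine ⟨?_⟩
  rintro ⟨⟨x, t⟩, ht⟩ ⟨⟨y, s⟩, hs⟩ hlt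
  rcases (hlt.le : x ≤ y ∧ t ≤ s).1.eq_or_lt with rfl | hxy
  · obtain ⟨r, hr, htr, hrs⟩ := exists_between_jumps hc ht hs (Prod.mk_lt_mk_iff_right.1 hlt)
    exact ⟨⟨(x, r), hr⟩, Prod.mk_lt_mk_iff_right.2 htr, Prod.mk_lt_mk_iff_right.2 hrs⟩
  · obtain ⟨z, hxz, hzy⟩ := exists_between hxy
    have hz : (θ, z, fun n => φ n (θ, z)) ∈ blowUp c φ := graphLift_mem_blowUp (θ, z)
    exact ⟨⟨(z, fun n => φ n (θ, z)), hz⟩,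
      Prod.mk_lt_mk_of_lt_of_le hxz (jumps_le_of_lt hφ ht hz hxz),
      Prod.mk_lt_mk_of_lt_of_le hzy (jumps_le_of_lt hφ hz hs hzy)⟩

theorem isLeast_fiber_blowUp [OrderBot X] (hφ : ∀ n, IsJumpFunction (c n) (φ n))
    (hbot : ∀ n, (c n).2 ≠ ⊥) (θ : Θ) :
    IsLeast (Prod.mk θ ⁻¹' blowUp c φ) (⊥, fun n => φ n (θ, ⊥)) := by
  have hmem : (θ, ⊥, fun n => φ n (θ, ⊥)) ∈ blowUp c φ := graphLift_mem_blowUp (θ, ⊥)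
  refine ⟨hmem, ?_⟩
  rintro ⟨x, t⟩ ht
  refine ⟨bot_le, ?_⟩
  rcases (bot_le : ⊥ ≤ x).eq_or_lt with rfl | hx
  · exact fun n => (ht n fun h => hbot n (congrArg Prod.snd h).symm).ge
  · exact jumps_le_of_lt hφ hmem ht hx

theorem isGreatest_fiber_blowUp [OrderTop X] (hφ : ∀ n, IsJumpFunction (c n) (φ n))
    (htop : ∀ n, (c n).2 ≠ ⊤) (θ : Θ) :
    IsGreatest (Prod.mk θ ⁻¹' blowUp c φ) (⊤, fun n => φ n (θ, ⊤)) := by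
  have hmem : (θ, ⊤, fun n => φ n (θ, ⊤)) ∈ blowUp c φ := graphLift_mem_blowUp (θ, ⊤)
  refine ⟨hmem, ?_⟩
  rintro ⟨x, t⟩ ht
  refine ⟨le_top, ?_⟩
  rcases (le_top : x ≤ ⊤).eq_or_lt with rfl | hx
  · exact fun n => (ht n fun h => htop n (congrArg Prod.snd h).symm).le
  · exact jumps_le_of_lt hφ ht hmem hx

theorem continuous_jumps_of_ne (hφ : ∀ n, IsJumpFunction (c n) (φ n)) {x : X}
    (hx : ∀ n, (c n).2 ≠ x) : Continuous fun θ n => φ n (θ, x) := by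
  refine continuous_pi fun n => continuous_iff_continuousAt.2 fun θ => ?_
  exact ((hφ n).continuousAt (θ, x) fun h => hx n (congrArg Prod.snd h).symm).comp
    (f := fun θ => (θ, x)) (by fun_prop)

theorem isClosed_blowUp [T1Space Θ] [T1Space X] (hφ : ∀ n, IsJumpFunction (c n) (φ n)) :
    IsClosed (blowUp c φ) := by
  have hcoord (n : ι) : Continuous fun e : Θ × X × (ι → unitInterval) =>
      (basePoint e, e.2.2 n) := by
    unfold basePoint
    fun_prop
  have hinter : blowUp c φ =
      ⋂ n, (fun e => (basePoint e, e.2.2 n)) ⁻¹' {q | q.1 ≠ c n → q.2 = φ n q.1} := by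
    ext e
    simp [blowUp, basePoint]
  exact hinter ▸ isClosed_iInter fun n =>
    (isClosed_setOf_ne_imp_eq (hφ n).continuousAt).preimage (hcoord n)

theorem exists_isFiberChart_blowUp [CompactSpace Θ] [T2Space Θ] [BoundedOrder X] [OrderTopology X]
    [Countable ι] (e : X ≃o unitInterval) (hc : Injective c)
    (hφ : ∀ n, IsJumpFunction (c n) (φ n)) (hbot : ∀ n, (c n).2 ≠ ⊥) (htop : ∀ n, (c n).2 ≠ ⊤) :
    ∃ Y : blowUp c φ ≃ₜ Θ × X, IsFiberChart Y := by
  obtain ⟨S, hSc, hSm⟩ := exists_continuous_strictMono_real ι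
  have : Nontrivial X := e.toEquiv.nontrivial
  have : DenselyOrdered X := (denselyOrdered_iff_of_orderIsoClass e).2 inferInstance
  have : CompactSpace X := e.symm.toHomeomorph.compactSpace
  have hheight_cont : Continuous fun z : X × (ι → unitInterval) => (e z.1 : ℝ) + S z.2 := by
    have := map_continuous e
    fun_prop
  have hheight_mono : StrictMono fun z : X × (ι → unitInterval) => (e z.1 : ℝ) + S z.2 := by
    intro z w hzw
    rcases Prod.lt_iff.1 hzw with ⟨hX, hle⟩ | ⟨hle, hlt⟩
    · exact add_lt_add_of_lt_of_le (e.strictMono hX) (hSm.monotone hle)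
    · exact add_lt_add_of_le_of_lt (e.monotone hle) (hSm hlt)
  obtain ⟨Y, hY⟩ := exists_isFiberChart_unitInterval (isClosed_blowUp hφ).isCompact
    (isChain_fiber_blowUp hc hφ) (denselyOrdered_fiber_blowUp hc hφ)
    (continuous_const.prodMk (continuous_jumps_of_ne hφ hbot))
    (continuous_const.prodMk (continuous_jumps_of_ne hφ htop))
    (isLeast_fiber_blowUp hφ hbot) (isGreatest_fiber_blowUp hφ htop)
    (fun θ => Prod.mk_lt_mk_of_lt_of_le bot_lt_top fun n => (hφ n).mono _ _ ⟨rfl, bot_le⟩)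
    hheight_cont hheight_mono
  exact ⟨_, hY.trans_orderIso e.symm⟩

end Order

end BlowUp

section BlowUpDynamics

variable {Θ X ι : Type*} {c : ι → Θ × X} {φ : ι → Θ × X → unitInterval} {f : Θ × X → Θ × X}
  {σ : Equiv.Perm ι}

/-- The lift to the blow-up of a map `f` which permutes the points `c n` by `σ`. -/
def blowUpMap (f : Θ × X → Θ × X) (σ : Equiv.Perm ι) (e : Θ × X × (ι → unitInterval)) :
    Θ × X × (ι → unitInterval) :=
  ((f (basePoint e)).1, (f (basePoint e)).2, e.2.2 ∘ σ.symm)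

theorem mapsTo_blowUpMap (hfc : ∀ n, f (c n) = c (σ n)) (hfφ : ∀ n p, φ (σ n) (f p) = φ n p) :
    MapsTo (blowUpMap f σ) (blowUp c φ) (blowUp c φ) := by
  intro e he n hn
  obtain ⟨m, rfl⟩ := σ.surjective n
  have hm : basePoint e ≠ c m := fun h => hn ((congrArg f h).trans (hfc m))
  calc e.2.2 (σ.symm (σ m)) = e.2.2 m := by rw [σ.symm_apply_apply]
    _ = φ m (basePoint e) := he m hm
    _ = φ (σ m) (f (basePoint e)) := (hfφ m _).symm

theorem continuous_basePoint [TopologicalSpace Θ] [TopologicalSpace X] :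
    Continuous (basePoint : Θ × X × (ι → unitInterval) → Θ × X) := by
  unfold basePoint
  fun_prop

theorem continuous_blowUpMap [TopologicalSpace Θ] [TopologicalSpace X] (hf : Continuous f)
    (σ : Equiv.Perm ι) : Continuous (blowUpMap f σ) := by
  have hfbase := hf.comp (continuous_basePoint (ι := ι))
  have hshift : Continuous fun t : ι → unitInterval => t ∘ σ.symm := by fun_prop
  exact hfbase.fst.prodMk (hfbase.snd.prodMk (hshift.comp continuous_snd.snd))

theorem fiberLE_blowUpMap_iff [LinearOrder X] (hf : ∀ p q, FiberLE (f p) (f q) ↔ FiberLE p q)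
    (σ : Equiv.Perm ι) (e e' : Θ × X × (ι → unitInterval)) :
    FiberLE (blowUpMap f σ e) (blowUpMap f σ e') ↔ FiberLE e e' := by
  have hshift : e.2.2 ∘ σ.symm ≤ e'.2.2 ∘ σ.symm ↔ e.2.2 ≤ e'.2.2 :=
    (σ.symm.surjective.forall (p := fun n => e.2.2 n ≤ e'.2.2 n)).symm
  calc _ ↔ FiberLE (f (basePoint e)) (f (basePoint e')) ∧ e.2.2 ∘ σ.symm ≤ e'.2.2 ∘ σ.symm :=
        and_assoc.symm
    _ ↔ FiberLE (basePoint e) (basePoint e') ∧ e.2.2 ≤ e'.2.2 := and_congr (hf _ _) hshift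
    _ ↔ FiberLE e e' := and_assoc

end BlowUpDynamics

section BlowDown

variable {Θ X ι : Type*} [TopologicalSpace Θ] [TopologicalSpace X] {c : ι → Θ × X}
  {φ : ι → Θ × X → unitInterval} {f : Θ × X → Θ × X} {σ : Equiv.Perm ι} {Y : blowUp c φ ≃ₜ Θ × X}

/-- The projection of the blow-up to `Θ × X`, read in the chart `Y`. -/
def blowDown (Y : blowUp c φ ≃ₜ Θ × X) (q : Θ × X) : Θ × X := basePoint (Y.symm q).1

/-- The lift of `f` to the blow-up, read in the chart `Y`. -/
def chartMap (Y : blowUp c φ ≃ₜ Θ × X) (hT : MapsTo (blowUpMap f σ) (blowUp c φ) (blowUp c φ)) :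
    Θ × X → Θ × X :=
  Y ∘ hT.restrict ∘ Y.symm

theorem continuous_blowDown (Y : blowUp c φ ≃ₜ Θ × X) : Continuous (blowDown Y) :=
  continuous_basePoint.comp (continuous_subtype_val.comp Y.symm.continuous)

theorem surjective_blowDown (Y : blowUp c φ ≃ₜ Θ × X) : Surjective (blowDown Y) := fun p =>
  ⟨Y ⟨graphLift φ p, graphLift_mem_blowUp p⟩,
    congrArg (basePoint ∘ Subtype.val) (Y.symm_apply_apply _)⟩

theorem continuous_chartMap (Y : blowUp c φ ≃ₜ Θ × X) (hf : Continuous f)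
    (hT : MapsTo (blowUpMap f σ) (blowUp c φ) (blowUp c φ)) : Continuous (chartMap Y hT) :=
  Y.continuous.comp ((continuous_blowUpMap hf σ).restrict hT |>.comp Y.symm.continuous)

theorem blowDown_semiconj (Y : blowUp c φ ≃ₜ Θ × X)
    (hT : MapsTo (blowUpMap f σ) (blowUp c φ) (blowUp c φ)) :
    Semiconj (blowDown Y) (chartMap Y hT) f := fun q =>
  congrArg (basePoint ∘ Subtype.val) (Y.symm_apply_apply (hT.restrict _ _ _ (Y.symm q)))

theorem eq_of_blowDown_eq {q q' : Θ × X} (h : blowDown Y q = blowDown Y q')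
    (hq : blowDown Y q ∉ range c) : q = q' := by
  have hq' : blowDown Y q' ∉ range c := h ▸ hq
  refine Y.symm.injective (Subtype.ext ?_)
  rw [eq_graphLift (Y.symm q).2 hq, eq_graphLift (Y.symm q').2 hq']
  exact congrArg (graphLift φ) h

namespace IsFiberChart

variable [LinearOrder X]

theorem blowDown_fst (hY : IsFiberChart Y) (q : Θ × X) : (blowDown Y q).1 = q.1 := by
  rw [← congrArg Prod.fst (Y.apply_symm_apply q), hY.fst_apply]
  rfl

theorem fiberLE_symm_iff (hY : IsFiberChart Y) (q q' : Θ × X) :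
    FiberLE (Y.symm q).1 (Y.symm q').1 ↔ FiberLE q q' := by
  rw [← hY.fiberLE_iff, Y.apply_symm_apply, Y.apply_symm_apply]

theorem monotone_blowDown (hY : IsFiberChart Y) (θ : Θ) :
    Monotone fun x => (blowDown Y (θ, x)).2 := fun x y hxy =>
  (fiberLE_basePoint ((hY.fiberLE_symm_iff (θ, x) (θ, y)).2 ⟨rfl, hxy⟩)).2

theorem chartMap_fst (hY : IsFiberChart Y) {α : Θ → Θ} (hf : ∀ p, (f p).1 = α p.1)
    (hT : MapsTo (blowUpMap f σ) (blowUp c φ) (blowUp c φ)) (q : Θ × X) :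
    (chartMap Y hT q).1 = α q.1 := by
  rw [← hY.blowDown_fst, blowDown_semiconj Y hT, hf, hY.blowDown_fst]

theorem fiberLE_chartMap_iff (hY : IsFiberChart Y) (hf : ∀ p q, FiberLE (f p) (f q) ↔ FiberLE p q)
    (hT : MapsTo (blowUpMap f σ) (blowUp c φ) (blowUp c φ)) (q q' : Θ × X) :
    FiberLE (chartMap Y hT q) (chartMap Y hT q') ↔ FiberLE q q' :=
  (hY.fiberLE_iff _ _).trans ((fiberLE_blowUpMap_iff hf σ _ _).trans (hY.fiberLE_symm_iff q q'))

theorem blowDown_preimage_singleton (hY : IsFiberChart Y) {p : Θ × X} (hp : p ∉ range c) :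
    ∃ x, blowDown Y ⁻¹' {p} = {(p.1, x)} := by
  obtain ⟨⟨θ, x⟩, rfl⟩ := surjective_blowDown Y p
  refine ⟨x, Subset.antisymm (fun q hq => ?_) ?_⟩
  · rw [hY.blowDown_fst]
    exact (eq_of_blowDown_eq (Eq.symm hq) hp).symm
  · rintro _ rfl
    rw [hY.blowDown_fst]
    rfl

theorem blowDown_preimage_segment (hY : IsFiberChart Y) (hc : Injective c) (n : ι) :
    ∃ x₁ x₂, x₁ < x₂ ∧ blowDown Y ⁻¹' {c n} = {(c n).1} ×ˢ Icc x₁ x₂ := by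
  classical
  let e (s : unitInterval) : blowUp c φ := ⟨segmentLift c φ n s, segmentLift_mem_blowUp n s⟩
  have he_fst (s : unitInterval) : (Y (e s)).1 = (c n).1 := hY.fst_apply (e s)
  have he_lt : ¬ FiberLE (Y (e 1)) (Y (e 0)) :=
    (hY.fiberLE_iff _ _).trans fiberLE_segmentLift_iff |>.not.2 zero_lt_one.not_ge
  refine ⟨(Y (e 0)).2, (Y (e 1)).2,
    not_le.1 fun h => he_lt ⟨(he_fst 1).trans (he_fst 0).symm, h⟩, ?_⟩
  ext q
  calc blowDown Y q = c n
      ↔ FiberLE (e 0).1 (Y.symm q).1 ∧ FiberLE (Y.symm q).1 (e 1).1 :=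
        basePoint_eq_iff_mem_segment hc (Y.symm q).2 n
    _ ↔ FiberLE (Y (e 0)) q ∧ FiberLE q (Y (e 1)) := by
        simp only [← hY.fiberLE_iff, Y.apply_symm_apply]
    _ ↔ q ∈ {(c n).1} ×ˢ Icc (Y (e 0)).2 (Y (e 1)).2 := by
        simp only [FiberLE, he_fst, mem_prod, mem_singleton_iff, mem_Icc]
        tauto

theorem not_continuous_of_blowDown_eq (hY : IsFiberChart Y) {γ : Θ → X} (n : ι)
    (hφ_ext : ∀ g : Θ → unitInterval, (∀ θ ≠ (c n).1, g θ = φ n (θ, γ θ)) → ¬ Continuous g)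
    {η : Θ → X} (hη : ∀ θ, (blowDown Y (θ, η θ)).2 = γ θ) : ¬ Continuous η := by
  intro hηc
  have hbase (θ : Θ) : blowDown Y (θ, η θ) = (θ, γ θ) :=
    Prod.ext (hY.blowDown_fst _) (hη θ)
  refine hφ_ext (fun θ => (Y.symm (θ, η θ)).1.2.2 n) (fun θ hθ => ?_) ?_
  · have hne : blowDown Y (θ, η θ) ≠ c n := fun h =>
      hθ (congrArg Prod.fst ((hbase θ).symm.trans h))
    exact ((Y.symm (θ, η θ)).2 n hne).trans (congrArg (φ n) (hbase θ))
  · exact (continuous_apply n).comp (continuous_subtype_val.comp (Y.symm.continuous.comp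
      (continuous_id.prodMk hηc))).snd.snd

end IsFiberChart

end BlowDown

section CurvePreimage

variable {Θ : Type*} {I : Set ℝ} {α : Θ → Θ} {f h : Θ × I → Θ × I} {γ : Θ → I}

theorem isClosed_curveGraph [TopologicalSpace Θ] (hγ : Continuous γ) : IsClosed (curveGraph γ) :=
  isClosed_eq continuous_snd (hγ.comp continuous_fst)

theorem image_preimage_curveGraph_subset (hγ : ∀ θ, f (θ, γ θ) = (α θ, γ (α θ)))
    {fhat : Θ × I → Θ × I} (hh : Semiconj h fhat f) :
    fhat '' (h ⁻¹' curveGraph γ) ⊆ h ⁻¹' curveGraph γ := by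
  rintro _ ⟨q, hq, rfl⟩
  have hhq : h q = ((h q).1, γ (h q).1) := Prod.ext rfl hq
  rw [mem_preimage, hh q, hhq, hγ]
  rfl

theorem fst_image_preimage_curveGraph (hfst : ∀ q, (h q).1 = q.1)
    (hh : Surjective h) (γ : Θ → I) : Prod.fst '' (h ⁻¹' curveGraph γ) = univ := by
  refine eq_univ_of_forall fun θ => ?_
  obtain ⟨q, hq⟩ := hh (θ, γ θ)
  have hqθ : q.1 = θ := (hfst q).symm.trans (congrArg Prod.fst hq)
  exact ⟨q, congrArg (· ∈ curveGraph γ) hq |>.mpr rfl, hqθ⟩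

theorem pinched_preimage_curveGraph (hfst : ∀ q, (h q).1 = q.1) {θ : Θ}
    (hθ : ∃ x, h ⁻¹' {(θ, γ θ)} = {(θ, x)}) : Pinched (h ⁻¹' curveGraph γ) := by
  obtain ⟨x, hx⟩ := hθ
  have hmem (y : I) : (θ, y) ∈ h ⁻¹' curveGraph γ ↔ y = x :=
    calc (h (θ, y)).2 = γ (h (θ, y)).1 ↔ h (θ, y) = (θ, γ θ) := by
          rw [Prod.ext_iff, hfst, eq_self_iff_true, true_and]
      _ ↔ (θ, y) ∈ h ⁻¹' {(θ, γ θ)} := Iff.rfl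
      _ ↔ y = x := by rw [hx, mem_singleton_iff, Prod.mk_right_inj]
  exact ⟨θ, x, (hmem x).2 rfl, fun y => (hmem y).1⟩

end CurvePreimage

section Conclusion

variable {Θ ι : Type*} [TopologicalSpace Θ] {I : Set ℝ} {α : Θ → Θ} {f : Θ × I → Θ × I}
  {γ : Θ → I}

theorem IsFiberChart.blowUpConclusion [Countable ι] {c : ι → Θ × I} {φ : ι → Θ × I → unitInterval}
    {Y : blowUp c φ ≃ₜ Θ × I} (hY : IsFiberChart Y) (hc : Injective c)
    (hcγ : range c ⊆ curveGraph γ) (n : ι)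
    (hφ_ext : ∀ g : Θ → unitInterval, (∀ θ ≠ (c n).1, g θ = φ n (θ, γ θ)) → ¬ Continuous g)
    (hα : Injective α) (hf : ForcedIncreasing α f) {σ : Equiv.Perm ι}
    (hT : MapsTo (blowUpMap f σ) (blowUp c φ) (blowUp c φ)) :
    BlowUpConclusion α f γ (chartMap Y hT) (blowDown Y) := by
  refine ⟨⟨continuous_blowDown Y, surjective_blowDown Y, (blowDown_semiconj Y hT).comp_eq⟩,
    hY.blowDown_fst, ?_, hY.monotone_blowDown, ?_, ⟨range c, hcγ, countable_range c, ?_, ?_⟩, ?_⟩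
  · have hfst := hY.chartMap_fst hf.2.1 hT
    exact ⟨continuous_chartMap Y hf.1 hT, hfst,
      FiberLE.strictMono_snd hfst (hY.fiberLE_chartMap_iff (hf.fiberLE_iff hα) hT)⟩
  · exact fun q hq q' _ h => eq_of_blowDown_eq h fun hqc => hq (hcγ hqc)
  · exact forall_mem_range.2 (hY.blowDown_preimage_segment hc)
  · exact fun p hp => hY.blowDown_preimage_singleton hp.2
  · exact fun η hη hsub => hY.not_continuous_of_blowDown_eq n hφ_ext
      (fun θ => (hsub (a := (θ, η θ)) rfl).trans (congrArg γ (hY.blowDown_fst _))) hη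

end Conclusion

section Orbit

open Topology

theorem neBot_nhdsNE_of_forall_dist {Θ : Type*} [PseudoMetricSpace Θ] {θs : Θ}
    (h : ∀ ε > (0 : ℝ), ∃ θ, θ ≠ θs ∧ dist θ θs < ε) : (𝓝[≠] θs).NeBot := by
  refine mem_closure_iff_nhdsWithin_neBot.1 (Metric.mem_closure_iff.2 fun ε hε => ?_)
  obtain ⟨θ, hne, hdist⟩ := h ε hε
  exact ⟨θ, hne, dist_comm θ θs ▸ hdist⟩

variable {Θ : Type*} [TopologicalSpace Θ] {θs : Θ}

theorem injective_zpow_apply {α : Θ ≃ₜ Θ} (h : ∀ n : ℤ, n ≠ 0 → (α ^ n) θs ≠ θs) :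
    Injective fun n : ℤ => (α ^ n) θs := by
  intro m n hmn
  by_contra hne
  refine h (m - n) (sub_ne_zero.2 hne) ((α ^ n).injective ?_)
  rw [← Homeomorph.mul_apply, ← zpow_add, add_sub_cancel]
  exact hmn

theorem exists_notMem_range_zpow_apply [BaireSpace Θ] [T1Space Θ] [(𝓝[≠] θs).NeBot]
    (α : Θ ≃ₜ Θ) : ∃ θ, ∀ n : ℤ, (α ^ n) θs ≠ θ := by
  have hdense (n : ℤ) : Dense {(α ^ n) θs}ᶜ := by
    have : (𝓝[≠] (α ^ n) θs).NeBot := (α ^ n).map_punctured_nhds_eq θs ▸ inferInstance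
    exact dense_compl_singleton _
  have hinter : Dense (⋂ n : ℤ, {(α ^ n) θs}ᶜ) :=
    dense_iInter_of_isOpen (fun _ => isOpen_compl_singleton) hdense
  have : Nonempty Θ := ⟨θs⟩
  obtain ⟨θ, hθ⟩ := hinter.nonempty
  exact ⟨θ, fun n h => mem_iInter.1 hθ n h.symm⟩

end Orbit

section IntervalExtension

open Topology

theorem exists_eq_Icc_of_isCompact {I : Set ℝ} (hI : IsCompact I) (hconn : I.OrdConnected)
    (hI_int : (interior I).Nonempty) : ∃ a b, a < b ∧ I = Icc a b := by
  have hIcc : I = Icc (sInf I) (sSup I) :=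
    eq_Icc_of_connected_compact ⟨hI_int.mono interior_subset, hconn.isPreconnected⟩ hI
  rw [hIcc, interior_Icc] at hI_int
  exact ⟨sInf I, sSup I, nonempty_Ioo.1 hI_int, hIcc⟩

variable {Θ : Type*} [MetricSpace Θ] [CompactSpace Θ] {a b : ℝ}

theorem exists_blowUpConclusion_of_aperiodic (hab : a < b) {α : Θ ≃ₜ Θ} {θs : Θ}
    [(𝓝[≠] θs).NeBot] (haper : ∀ n : ℤ, n ≠ 0 → (α ^ n) θs ≠ θs)
    {f : Θ × Icc a b → Θ × Icc a b} (hf : ForcedIncreasing α f) {γ : Θ → Icc a b}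
    (hγ : Continuous γ) (hγint : ∀ θ, (γ θ : ℝ) ∈ Ioo a b)
    (hγinv : ∀ θ, f (θ, γ θ) = (α θ, γ (α θ))) :
    ∃ fhat h, BlowUpConclusion α f γ fhat h ∧ ∃ θ x, h ⁻¹' {(θ, γ θ)} = {(θ, x)} := by
  have : Fact (a ≤ b) := ⟨hab.le⟩
  obtain ⟨φ, hφ, hφ_equiv, hφ_ext⟩ := exists_equivariant_jumpFamily hab.le hf hγ hγinv θs
  obtain ⟨e⟩ := nonempty_orderIso_unitInterval hab
  let c (n : ℤ) : Θ × Icc a b := ((α ^ n) θs, γ ((α ^ n) θs))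
  have hc : Injective c := Injective.of_comp (f := Prod.fst) (injective_zpow_apply haper)
  have hfc (n : ℤ) : f (c n) = c (Equiv.addRight 1 n) := by
    rw [hγinv, ← Homeomorph.mul_apply, mul_self_zpow]
    rfl
  have hbot (n : ℤ) : (c n).2 ≠ ⊥ := fun h => (hγint _).1.ne' (congrArg Subtype.val h)
  have htop (n : ℤ) : (c n).2 ≠ ⊤ := fun h => (hγint _).2.ne (congrArg Subtype.val h)
  obtain ⟨Y, hY⟩ := exists_isFiberChart_blowUp e hc hφ hbot htop
  obtain ⟨θ, hθ⟩ := exists_notMem_range_zpow_apply (θs := θs) α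
  have hθc : (θ, γ θ) ∉ range c := fun ⟨n, hn⟩ => hθ n (congrArg Prod.fst hn)
  exact ⟨_, _, hY.blowUpConclusion hc (range_subset_iff.2 fun _ => rfl) 0 hφ_ext α.injective hf
    (mapsTo_blowUpMap hfc hφ_equiv), θ, hY.blowDown_preimage_singleton hθc⟩

end IntervalExtension

/-- the blow-up construction over an arbitrary homeomorphism of a compact
metric space possessing a non-isolated aperiodic point: properties (i)-(v) still hold and
`h⁻¹(Γ)` is a closed invariant pinched set projecting onto the whole base. -/
theorem stmt16 {Θ : Type} [MetricSpace Θ] [CompactSpace Θ]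
    (α : Θ ≃ₜ Θ) (θs : Θ)
    (haper : ∀ n : ℤ, n ≠ 0 → zIter α.toEquiv n θs ≠ θs)
    (hnoniso : ∀ ε > (0 : ℝ), ∃ θ : Θ, θ ≠ θs ∧ dist θ θs < ε)
    {I : Set ℝ} (hIcomp : IsCompact I) (hIconn : I.OrdConnected)
    (f : Θ × ↥I → Θ × ↥I) (hf : ForcedIncreasing (⇑α) f)
    (γ : Θ → ↥I) (hγc : Continuous γ) (hγint : ∀ θ : Θ, (γ θ : ℝ) ∈ interior I)
    (hγinv : ∀ θ : Θ, f (θ, γ θ) = (α θ, γ (α θ))) :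
    ∃ fhat h : Θ × ↥I → Θ × ↥I,
      BlowUpConclusion (⇑α) f γ fhat h ∧
      IsClosed (h ⁻¹' curveGraph γ) ∧
      fhat '' (h ⁻¹' curveGraph γ) ⊆ h ⁻¹' curveGraph γ ∧
      Pinched (h ⁻¹' curveGraph γ) ∧
      Prod.fst '' (h ⁻¹' curveGraph γ) = Set.univ := by
  have := neBot_nhdsNE_of_forall_dist hnoniso
  obtain ⟨a, b, hab, rfl⟩ := exists_eq_Icc_of_isCompact hIcomp hIconn ⟨γ θs, hγint θs⟩
  simp only [interior_Icc] at hγint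
  simp only [zIter_toEquiv] at haper
  obtain ⟨fhat, h, hblow, θ, hθ⟩ :=
    exists_blowUpConclusion_of_aperiodic hab haper hf hγc hγint hγinv
  have ⟨⟨hh_cont, hh_surj, hh_semiconj⟩, hh_fst, _⟩ := hblow
  exact ⟨fhat, h, hblow, (isClosed_curveGraph hγc).preimage hh_cont,
    image_preimage_curveGraph_subset hγinv (congrFun hh_semiconj),
    pinched_preimage_curveGraph hh_fst hθ, fst_image_preimage_curveGraph hh_fst hh_surj γ⟩

end
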